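/- Let v_1 ≥ v_2 ≥ ⋯ ≥ v_n ≥ 0 and a price P with 0 < P ≤ max_{1≤i≤n} i·v_i, and set i* = max{ i : i·v_i ≥ P }. Let 𝒢 = {G^1,…,G^k} be the optimal grouping output by Algorithm 1 (the greedy grouping with the opt_WTP-maximizing threshold opt_CV, with the leftover tail merged into the last subgroup, so that WTP_total(𝒢) = k·opt_CV = opt_WTP). Apply the two-level allocation at price P: ordering the subgroups by WTP non-increasingly as W_1 ≥ ⋯ ≥ W_k, set j* = max{ j : j·W_j ≥ P }; the j* highest-WTP subgroups get access, each paying P/j*; within an accessing subgroup with member valuations w_1 ≥ ⋯ ≥ w_m, exactly the members of rank t ≤ max{ s : s·w_s ≥ P/j* } get access. Then j* = k (all k subgroups get access), and every member i with i ≤ i* gets access. In particular, the access set of 𝒢 contains the access set {1,…,i*} of the degenerate grouping {{1,…,n}}, i.e. 𝒢 is less-excludable than the degenerate grouping. -/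

import Mathlib

open scoped Classical

noncomputable section

/-- The willingness to pay of a subgroup `S` of members, where `v` lists the members'
valuations (non-increasing in the index): `WTP(S) = max_{1 ≤ i ≤ |S|} i · w_i`, where
`w_1 ≥ ⋯ ≥ w_m` are the valuations of the members of `S` in non-increasing order.
Since `v` is non-increasing, the rank of member `a` in `S` is `|{c ∈ S : c ≤ a}|`. -/
def WTP (v : ℕ → ℝ) (S : Finset ℕ) : ℝ :=
  sSup ((fun a => ((S.filter (fun c => c ≤ a)).card : ℝ) * v a) '' (S : Set ℕ))

/-- The total willingness to pay of a grouping `𝒢`: listing the subgroup values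
non-increasingly as `W_1 ≥ ⋯ ≥ W_k`, it is `max_{1 ≤ j ≤ k} j · W_j`.  Equivalently,
it is the max over `G ∈ 𝒢` of `|{G' ∈ 𝒢 : WTP(G') ≥ WTP(G)}| · WTP(G)`. -/
def WTPtotal (v : ℕ → ℝ) (𝒢 : Finset (Finset ℕ)) : ℝ :=
  sSup ((fun G => ((𝒢.filter (fun G' => WTP v G ≤ WTP v G')).card : ℝ) * WTP v G) ''
    (𝒢 : Set (Finset ℕ)))

/-- `𝒢` is a grouping of the members `{1, …, n}`: a partition into nonempty subgroups. -/
def IsGrouping (n : ℕ) (𝒢 : Finset (Finset ℕ)) : Prop :=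
  (∀ G ∈ 𝒢, G.Nonempty) ∧
  (𝒢 : Set (Finset ℕ)).PairwiseDisjoint id ∧
  𝒢.sup id = Finset.Icc 1 n

/-- A grouping is continuous if every subgroup is a set of consecutive indices. -/
def ContinuousGrouping (𝒢 : Finset (Finset ℕ)) : Prop :=
  ∀ G ∈ 𝒢, ∀ a ∈ G, ∀ c ∈ G, ∀ b, a ≤ b → b ≤ c → b ∈ G

/-- `GreedyBoundaries v n CV k N` says that the greedy procedure with threshold `CV`,
scanning members `1, …, n` (with valuations `v_1 ≥ ⋯ ≥ v_n`) in order, closes exactly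
`k` subgroups, the `j`-th closed subgroup being `Ĝ^j = {N_{j-1}+1, …, N_j}`:
a subgroup is closed the first time its size `s` and last-added member `i`
satisfy `s · v_i ≥ CV`, and the members after `N_k` never close a subgroup
(the leftover tail is `Ĝ^{k+1} = {N_k + 1, …, n}`). -/
def GreedyBoundaries (v : ℕ → ℝ) (n : ℕ) (CV : ℝ) (k : ℕ) (N : ℕ → ℕ) : Prop :=
  N 0 = 0 ∧
  (∀ j, 1 ≤ j → j ≤ k →
    N (j - 1) < N j ∧ N j ≤ n ∧
    CV ≤ ((N j - N (j - 1) : ℕ) : ℝ) * v (N j) ∧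
    (∀ i, N (j - 1) < i → i < N j → ((i - N (j - 1) : ℕ) : ℝ) * v i < CV)) ∧
  (∀ i, N k < i → i ≤ n → ((i - N k : ℕ) : ℝ) * v i < CV)

/-- Each member of a subgroup bounds its willingness to pay from below. -/
theorem le_WTP (v : ℕ → ℝ) {S : Finset ℕ} {a : ℕ} (ha : a ∈ S) :
    ((S.filter (fun c => c ≤ a)).card : ℝ) * v a ≤ WTP v S :=
  le_csSup (S.finite_toSet.image _).bddAbove ⟨a, ha, rfl⟩

theorem WTPtotal_singleton (v : ℕ → ℝ) (S : Finset ℕ) : WTPtotal v {S} = WTP v S := by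
  simp [WTPtotal, Finset.filter_singleton]

theorem isGrouping_singleton {n : ℕ} (hn : 1 ≤ n) : IsGrouping n {Finset.Icc 1 n} := by
  refine ⟨?_, ?_, ?_⟩
  · simpa using hn
  · simp
  · simp

/-- The rank of `a` in an interval of consecutive members. -/
theorem card_filter_le_Icc {m M a : ℕ} (ha : a ≤ M) :
    ((Finset.Icc (m + 1) M).filter (fun c => c ≤ a)).card = a - m := by
  have h : (Finset.Icc (m + 1) M).filter (fun c => c ≤ a) = Finset.Icc (m + 1) a := by
    ext c
    simp only [Finset.mem_filter, Finset.mem_Icc]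
    omega
  rw [h, Nat.card_Icc]
  omega

/-- The sizes of consecutive closed greedy subgroups do not decrease. -/
theorem GreedyBoundaries.size_le_succ {v : ℕ → ℝ} {n k : ℕ} {CV : ℝ} {N : ℕ → ℕ}
    (h : GreedyBoundaries v n CV k N)
    (hmono : ∀ i j, 1 ≤ i → i ≤ j → j ≤ n → v j ≤ v i) {j : ℕ} (hj : j + 2 ≤ k) :
    N (j + 1) - N j ≤ N (j + 2) - N (j + 1) := by
  obtain ⟨h₁, -, -, hfirst⟩ := h.2.1 (j + 1) (by omega) (by omega)
  obtain ⟨h₂, hn, hclose, -⟩ := h.2.1 (j + 2) (by omega) hj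
  simp only [Nat.add_sub_cancel, show j + 2 - 1 = j + 1 by omega] at h₁ hfirst h₂ hclose
  by_contra! hlt
  have hlow := hfirst (N j + (N (j + 2) - N (j + 1))) (by omega) (by omega)
  rw [Nat.add_sub_cancel_left] at hlow
  have hv := hmono (N j + (N (j + 2) - N (j + 1))) (N (j + 2)) (by omega) (by omega) hn
  have := mul_le_mul_of_nonneg_left hv (Nat.cast_nonneg (α := ℝ) (N (j + 2) - N (j + 1)))
  linarith

/-- The first `j` closed greedy subgroups have at most `j` times as many members as the next one. -/
theorem GreedyBoundaries.boundary_le {v : ℕ → ℝ} {n k : ℕ} {CV : ℝ} {N : ℕ → ℕ}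
    (h : GreedyBoundaries v n CV k N)
    (hmono : ∀ i j, 1 ≤ i → i ≤ j → j ≤ n → v j ≤ v i) {j : ℕ} (hj : j + 1 ≤ k) :
    N j ≤ j * (N (j + 1) - N j) := by
  induction j with
  | zero => simp [h.1]
  | succ j ih =>
    have hlt := (h.2.1 (j + 1) (by omega) (by omega)).1
    rw [Nat.add_sub_cancel] at hlt
    have hle := Nat.mul_le_mul_left (j + 1) (h.size_le_succ hmono hj)
    have := ih (by omega)
    rw [Nat.add_mul, one_mul] at hle
    change N (j + 1) ≤ (j + 1) * (N (j + 2) - N (j + 1))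
    omega

/-- The last member of a closed greedy subgroup pays at least the threshold, also after members
have been appended to the subgroup. -/
theorem GreedyBoundaries.le_rank_mul {v : ℕ → ℝ} {n k : ℕ} {CV : ℝ} {N : ℕ → ℕ}
    (h : GreedyBoundaries v n CV k N) {j M : ℕ} (hj : 1 ≤ j) (hjk : j ≤ k) (hM : N j ≤ M) :
    N j ∈ Finset.Icc (N (j - 1) + 1) M ∧
      CV ≤ (((Finset.Icc (N (j - 1) + 1) M).filter (fun c => c ≤ N j)).card : ℝ) * v (N j) := by
  obtain ⟨hlt, -, hclose, -⟩ := h.2.1 j hj hjk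
  refine ⟨Finset.mem_Icc.2 ⟨hlt, hM⟩, ?_⟩
  rwa [card_filter_le_Icc hM]

/-- Theorem 3: let `𝒢` be the optimal grouping output by Algorithm 1,
i.e. the `k` closed greedy subgroups with threshold `opt_CV` (here `CV`), the leftover
tail merged into the last one, with `k · CV = opt_WTP`.  Suppose the winning DAO pays
`P` with `0 < P ≤ max_{1 ≤ i ≤ n} i·v_i` and `i* = max { i : i·v_i ≥ P }`.  Applying
the two-level allocation at price `P`: all `k` subgroups get access (i.e. `j* = k`:
`k · WTP(G) ≥ P` for every subgroup `G`, each paying `P/k`), and every member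
`i ≤ i*` gets access within its subgroup (member `i ∈ G` gets access iff its rank in
`G` is at most `max { s : s · w_s ≥ P/k }`, i.e. iff some `a ∈ G` with `a ≥ i` has
`rank_G(a) · v_a ≥ P/k`).  Hence the access set of `𝒢` contains the access set
`{1,…,i*}` of the degenerate grouping: `𝒢` is less-excludable. -/
theorem stmt5 (n : ℕ) (v : ℕ → ℝ) (hn : 1 ≤ n)
    (hmono : ∀ i j, 1 ≤ i → i ≤ j → j ≤ n → v j ≤ v i)
    (hnonneg : ∀ i, 1 ≤ i → i ≤ n → 0 ≤ v i)
    (P : ℝ) (hP : 0 < P)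
    (CV : ℝ) (hCV : 0 < CV) (k : ℕ) (N : ℕ → ℕ) (hk : 1 ≤ k)
    (hgreedy : GreedyBoundaries v n CV k N)
    (hopt : IsGreatest {W : ℝ | ∃ 𝒢' : Finset (Finset ℕ), IsGrouping n 𝒢' ∧ WTPtotal v 𝒢' = W}
      ((k : ℝ) * CV))
    (𝒢 : Finset (Finset ℕ))
    (h𝒢 : 𝒢 = (Finset.Icc 1 (k - 1)).image (fun j => Finset.Icc (N (j - 1) + 1) (N j)) ∪
            {Finset.Icc (N (k - 1) + 1) n})
    (istar : ℕ) (histar1 : 1 ≤ istar) (histar2 : istar ≤ n)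
    (histar3 : P ≤ (istar : ℝ) * v istar)
    (histar4 : ∀ i, 1 ≤ i → i ≤ n → P ≤ (i : ℝ) * v i → i ≤ istar) :
    (∀ G ∈ 𝒢, P ≤ (k : ℝ) * WTP v G) ∧
    (∀ i, 1 ≤ i → i ≤ istar → ∀ G ∈ 𝒢, i ∈ G →
      ∃ a ∈ G, i ≤ a ∧ P / (k : ℝ) ≤ ((G.filter (fun c => c ≤ a)).card : ℝ) * v a) := by
  have hk₀ : (0 : ℝ) < k := by exact_mod_cast hk
  have hPopt : P ≤ (k : ℝ) * CV := by
    have hle := hopt.2 ⟨_, isGrouping_singleton hn, WTPtotal_singleton v _⟩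
    have hmem := le_WTP v (Finset.mem_Icc.2 ⟨histar1, histar2⟩)
    rw [card_filter_le_Icc (m := 0) histar2, Nat.sub_zero] at hmem
    linarith
  have hPk : P / k ≤ CV := by rwa [div_le_iff₀' hk₀]
  have hG : ∀ G ∈ 𝒢, ∃ j M, 1 ≤ j ∧ j ≤ k ∧ N j ≤ M ∧ G = Finset.Icc (N (j - 1) + 1) M ∧
      (M = N j ∨ j = k ∧ M = n) := by
    intro G hG
    rw [h𝒢, Finset.mem_union, Finset.mem_image, Finset.mem_singleton] at hG
    rcases hG with ⟨j, hj, rfl⟩ | rfl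
    · rw [Finset.mem_Icc] at hj
      exact ⟨j, N j, hj.1, by omega, le_rfl, rfl, Or.inl rfl⟩
    · exact ⟨k, n, hk, le_rfl, (hgreedy.2.1 k hk le_rfl).2.1, rfl, Or.inr ⟨rfl, rfl⟩⟩
  refine ⟨fun G hGmem => ?_, fun i _ hi G hGmem hiG => ?_⟩
  · obtain ⟨j, M, hj, hjk, hM, rfl, -⟩ := hG G hGmem
    obtain ⟨hmem, hle⟩ := hgreedy.le_rank_mul hj hjk hM
    exact hPopt.trans (mul_le_mul_of_nonneg_left (hle.trans (le_WTP v hmem)) hk₀.le)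
  · obtain ⟨j, M, hj, hjk, hM, rfl, hlast⟩ := hG G hGmem
    obtain ⟨hmem, hle⟩ := hgreedy.le_rank_mul hj hjk hM
    rw [Finset.mem_Icc] at hiG
    rcases le_or_gt i (N j) with hiN | hiN
    · exact ⟨N j, hmem, hiN, hPk.trans hle⟩
    · obtain ⟨rfl, rfl⟩ : j = k ∧ M = n := hlast.resolve_left (by omega)
      refine ⟨istar, Finset.mem_Icc.2 ⟨by omega, histar2⟩, hi, ?_⟩
      rw [card_filter_le_Icc histar2, div_le_iff₀' hk₀, ← mul_assoc]
      refine histar3.trans (mul_le_mul_of_nonneg_right ?_ (hnonneg istar histar1 histar2))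
      obtain ⟨l, rfl⟩ : ∃ l, j = l + 1 := ⟨j - 1, by omega⟩
      rw [Nat.add_sub_cancel] at hiG ⊢
      have hbound := hgreedy.boundary_le hmono le_rfl
      have hsize : l * (N (l + 1) - N l) ≤ l * (istar - N l) :=
        Nat.mul_le_mul_left l (by omega)
      have hnat : istar ≤ (l + 1) * (istar - N l) := by
        rw [Nat.add_mul, one_mul]
        omega
      exact_mod_cast hnat

end
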